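/- Let F1 and F2 be CNF formulas with var(F1) ∩ var(F2) = B, let β : B → {0,1} be an assignment, and let P be any set of variables. Then |{γ restricted to P : γ : var(F1) ∪ var(F2) → {0,1}, γ extends β, γ satisfies F1 ∪ F2}| = |{γ1 restricted to P : γ1 : var(F1) → {0,1}, γ1 extends β, γ1 satisfies F1}| · |{γ2 restricted to P : γ2 : var(F2) → {0,1}, γ2 extends β, γ2 satisfies F2}|; i.e., the number of distinct P-projections of satisfying extensions of β multiplies across the two formulas joined on B. -/

import Mathlib

/-- Propositional variables. -/
abbrev Var : Type := ℕ

/-- A literal is a variable together with a polarity: `(x, true)` is the positive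
literal `x` and `(x, false)` is the negative literal `¬x`. -/
abbrev Lit : Type := Var × Bool

/-- A clause is a finite set of literals (interpreted as their disjunction). -/
abbrev Clause : Type := Finset Lit

/-- A CNF formula is a finite set of clauses (interpreted as their conjunction). -/
abbrev CNF : Type := Finset Clause

/-- The variables occurring in a clause. -/
def clauseVars (c : Clause) : Finset Var := c.image Prod.fst

/-- The variables `var(F)` occurring in a CNF formula `F`. -/
def cnfVars (F : CNF) : Finset Var := F.sup clauseVars

/-- A literal is set to `1` (true) by an assignment `γ`. -/
def litTrue (γ : Var → Bool) (l : Lit) : Prop := γ l.1 = l.2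

instance (γ : Var → Bool) (l : Lit) : Decidable (litTrue γ l) :=
  inferInstanceAs (Decidable (γ l.1 = l.2))

/-- `γ` satisfies `F`: every clause contains a literal set to `1` by `γ`. -/
def satisfies (γ : Var → Bool) (F : CNF) : Prop := ∀ c ∈ F, ∃ l ∈ c, litTrue γ l

instance (γ : Var → Bool) (F : CNF) : Decidable (satisfies γ F) :=
  inferInstanceAs (Decidable (∀ c ∈ F, ∃ l ∈ c, litTrue γ l))

/-- `F` is satisfiable: some (total) assignment satisfies it. -/
def Satisfiable (F : CNF) : Prop := ∃ γ : Var → Bool, satisfies γ F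

/-- Extend an assignment defined on the variables in `D` to a total assignment
(variables outside `D` get an irrelevant default value). -/
def extendAssign (D : Finset Var) (γ : {x // x ∈ D} → Bool) : Var → Bool :=
  fun x => if h : x ∈ D then γ ⟨x, h⟩ else false

/-- The formula `F[α]` under an assignment `α` of the variables in `U`:
remove every clause containing a literal set to `1` by `α`, and remove from the
remaining clauses all literals over `U` (those are exactly the ones set to `0`
by `α` in the remaining clauses). -/
def restrictCNF (F : CNF) (U : Finset Var) (α : Var → Bool) : CNF :=
  (F.filter fun c => ¬ ∃ l ∈ c, l.1 ∈ U ∧ litTrue α l).image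
    fun c => c.filter fun l => l.1 ∉ U

/-- The restriction of an assignment `γ` on the variables `D` to an arbitrary set
`P` of variables, i.e., the restriction of `γ` to `D ∩ P`. -/
def projAssign (D : Finset Var) (P : Set Var) (γ : {x // x ∈ D} → Bool) :
    {x : Var // x ∈ D ∧ x ∈ P} → Bool :=
  fun x => γ ⟨x.1, x.2.1⟩

/-! Restricting an assignment of `var(F1) ∪ var(F2)` to `var(F1)` and `var(F2)` identifies the
models of `F1 ∪ F2` extending `β` with the pairs of models of `F1` and `F2` extending `β`: the two
members of such a pair take the values of `β` on the shared variables, so they glue. The same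
splitting embeds the `P`-projections of the joint models into pairs of `P`-projections, and it
commutes with projecting, so its image is the full product of the two sets of projections. -/

theorem mem_cnfVars_of_mem {F : CNF} {c : Clause} {l : Lit} (hc : c ∈ F) (hl : l ∈ c) :
    l.1 ∈ cnfVars F :=
  Finset.le_sup (f := clauseVars) hc (Finset.mem_image_of_mem Prod.fst hl)

theorem satisfies_congr {F : CNF} {γ δ : Var → Bool} (h : ∀ x ∈ cnfVars F, γ x = δ x) :
    satisfies γ F ↔ satisfies δ F := by
  refine forall₂_congr fun c hc => exists_congr fun l => and_congr_right fun hl => ?_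
  rw [litTrue, litTrue, h l.1 (mem_cnfVars_of_mem hc hl)]

theorem satisfies_union {γ : Var → Bool} {F G : CNF} :
    satisfies γ (F ∪ G) ↔ satisfies γ F ∧ satisfies γ G :=
  Finset.forall_mem_union

theorem extendAssign_of_mem {D : Finset Var} (γ : {x // x ∈ D} → Bool) {x : Var} (hx : x ∈ D) :
    extendAssign D γ x = γ ⟨x, hx⟩ :=
  dif_pos hx

theorem satisfies_extendAssign_restrict₂ {F : CNF} {D E : Finset Var} (hF : cnfVars F ⊆ D)
    (hDE : D ⊆ E) (γ : {x // x ∈ E} → Bool) :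
    satisfies (extendAssign D (Finset.restrict₂ (π := fun _ => Bool) hDE γ)) F ↔
      satisfies (extendAssign E γ) F := by
  refine satisfies_congr fun x hx => ?_
  rw [extendAssign_of_mem _ (hF hx), extendAssign_of_mem _ (hDE (hF hx)), Finset.restrict₂]

section Splitting

variable {ι α : Type*} [DecidableEq ι]

/-- The pair of restrictions to `s` and to `t` of an assignment of `s ∪ t`. -/
def splitAssign (s t : Finset ι) (γ : {i // i ∈ s ∪ t} → α) :
    ({i // i ∈ s} → α) × ({i // i ∈ t} → α) :=
  (Finset.restrict₂ (π := fun _ => α) Finset.subset_union_left γ,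
    Finset.restrict₂ (π := fun _ => α) Finset.subset_union_right γ)

theorem exists_splitAssign_eq {s t : Finset ι} (f : {i // i ∈ s} → α) (g : {i // i ∈ t} → α)
    (hfg : ∀ i (hs : i ∈ s) (ht : i ∈ t), f ⟨i, hs⟩ = g ⟨i, ht⟩) :
    ∃ γ, splitAssign s t γ = (f, g) := by
  let γ (i : {i // i ∈ s ∪ t}) : α :=
    if hs : i.1 ∈ s then f ⟨i, hs⟩ else g ⟨i, (Finset.mem_union.1 i.2).resolve_left hs⟩
  refine ⟨γ, Prod.ext (funext fun i => dif_pos i.2) (funext fun i => ?_)⟩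
  by_cases hs : i.1 ∈ s
  · exact (dif_pos hs).trans (hfg i hs i.2)
  · exact dif_neg hs

/-- The pair of restrictions to `s ∩ P` and to `t ∩ P` of an assignment of `(s ∪ t) ∩ P`. The three
sets of variables are encoded as in the codomain of `projAssign`. -/
def splitProj (s t : Finset ι) (P : Set ι) (p : {i // i ∈ s ∪ t ∧ i ∈ P} → α) :
    ({i // i ∈ s ∧ i ∈ P} → α) × ({i // i ∈ t ∧ i ∈ P} → α) :=
  (fun i => p ⟨i, Finset.mem_union_left t i.2.1, i.2.2⟩,
    fun i => p ⟨i, Finset.mem_union_right s i.2.1, i.2.2⟩)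

theorem splitProj_injective (s t : Finset ι) (P : Set ι) :
    Function.Injective (splitProj (α := α) s t P) := by
  intro p q hpq
  obtain ⟨hs, ht⟩ := Prod.mk.inj hpq
  funext ⟨i, hi, hP⟩
  rcases Finset.mem_union.1 hi with his | hit
  · exact congrFun hs ⟨i, his, hP⟩
  · exact congrFun ht ⟨i, hit, hP⟩

end Splitting

theorem splitProj_projAssign (D₁ D₂ : Finset Var) (P : Set Var)
    (γ : {x // x ∈ D₁ ∪ D₂} → Bool) :
    splitProj D₁ D₂ P (projAssign (D₁ ∪ D₂) P γ) =
      Prod.map (projAssign D₁ P) (projAssign D₂ P) (splitAssign D₁ D₂ γ) :=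
  rfl

/-- The models of `F` among the assignments of `D` that extend `β`. As `B` need not be contained in
`D`, extending `β` means agreeing with it on `D ∩ B`. -/
def modelsExtending (D : Finset Var) {B : Finset Var} (β : {x // x ∈ B} → Bool) (F : CNF) :
    Set ({x // x ∈ D} → Bool) :=
  {γ | (∀ (x : {x // x ∈ D}) (hx : x.1 ∈ B), γ x = β ⟨x.1, hx⟩) ∧ satisfies (extendAssign D γ) F}

section Join

variable {F₁ F₂ : CNF} {D₁ D₂ B : Finset Var}

theorem mem_modelsExtending_union (hF₁ : cnfVars F₁ ⊆ D₁) (hF₂ : cnfVars F₂ ⊆ D₂)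
    {β : {x // x ∈ B} → Bool} {γ : {x // x ∈ D₁ ∪ D₂} → Bool} :
    γ ∈ modelsExtending (D₁ ∪ D₂) β (F₁ ∪ F₂) ↔
      splitAssign D₁ D₂ γ ∈ modelsExtending D₁ β F₁ ×ˢ modelsExtending D₂ β F₂ := by
  simp only [splitAssign, modelsExtending, Set.mem_prod, Set.mem_ofPred_eq, satisfies_union,
    satisfies_extendAssign_restrict₂ hF₁, satisfies_extendAssign_restrict₂ hF₂]
  constructor
  · rintro ⟨hβ, hγ₁, hγ₂⟩
    exact ⟨⟨fun _ hx => hβ _ hx, hγ₁⟩, ⟨fun _ hx => hβ _ hx, hγ₂⟩⟩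
  · rintro ⟨⟨hβ₁, hγ₁⟩, ⟨hβ₂, hγ₂⟩⟩
    refine ⟨fun x hx => ?_, hγ₁, hγ₂⟩
    rcases Finset.mem_union.1 x.2 with hx₁ | hx₂
    · exact hβ₁ ⟨x, hx₁⟩ hx
    · exact hβ₂ ⟨x, hx₂⟩ hx

theorem image_splitAssign_modelsExtending_union (hF₁ : cnfVars F₁ ⊆ D₁) (hF₂ : cnfVars F₂ ⊆ D₂)
    (hB : D₁ ∩ D₂ ⊆ B) (β : {x // x ∈ B} → Bool) :
    splitAssign D₁ D₂ '' modelsExtending (D₁ ∪ D₂) β (F₁ ∪ F₂) =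
      modelsExtending D₁ β F₁ ×ˢ modelsExtending D₂ β F₂ := by
  refine Set.Subset.antisymm
    (Set.image_subset_iff.2 fun γ hγ => (mem_modelsExtending_union hF₁ hF₂).1 hγ) ?_
  rintro ⟨γ₁, γ₂⟩ ⟨hγ₁, hγ₂⟩
  have agree (x : Var) (hx₁ : x ∈ D₁) (hx₂ : x ∈ D₂) : γ₁ ⟨x, hx₁⟩ = γ₂ ⟨x, hx₂⟩ := by
    have hx : x ∈ B := hB (Finset.mem_inter.2 ⟨hx₁, hx₂⟩)
    exact (hγ₁.1 ⟨x, hx₁⟩ hx).trans (hγ₂.1 ⟨x, hx₂⟩ hx).symm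
  obtain ⟨γ, hγ⟩ := exists_splitAssign_eq γ₁ γ₂ agree
  exact ⟨γ, (mem_modelsExtending_union hF₁ hF₂).2 (hγ ▸ ⟨hγ₁, hγ₂⟩), hγ⟩

theorem image_splitProj_image_projAssign_modelsExtending_union (hF₁ : cnfVars F₁ ⊆ D₁)
    (hF₂ : cnfVars F₂ ⊆ D₂) (hB : D₁ ∩ D₂ ⊆ B) (β : {x // x ∈ B} → Bool) (P : Set Var) :
    splitProj D₁ D₂ P ''
        (projAssign (D₁ ∪ D₂) P '' modelsExtending (D₁ ∪ D₂) β (F₁ ∪ F₂)) =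
      (projAssign D₁ P '' modelsExtending D₁ β F₁) ×ˢ
        (projAssign D₂ P '' modelsExtending D₂ β F₂) := by
  rw [← Set.prodMap_image_prod, ← image_splitAssign_modelsExtending_union hF₁ hF₂ hB]
  simp only [Set.image_image, splitProj_projAssign]

theorem projected_count_join_mul_general (hF₁ : cnfVars F₁ ⊆ D₁) (hF₂ : cnfVars F₂ ⊆ D₂)
    (hB : D₁ ∩ D₂ ⊆ B) (β : {x // x ∈ B} → Bool) (P : Set Var) :
    (projAssign (D₁ ∪ D₂) P '' modelsExtending (D₁ ∪ D₂) β (F₁ ∪ F₂)).ncard =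
      (projAssign D₁ P '' modelsExtending D₁ β F₁).ncard *
        (projAssign D₂ P '' modelsExtending D₂ β F₂).ncard := by
  rw [← Set.ncard_image_of_injective _ (splitProj_injective D₁ D₂ P),
    image_splitProj_image_projAssign_modelsExtending_union hF₁ hF₂ hB, Set.ncard_prod]

end Join

/-- Projected counts multiply across a join: for CNF formulas `F1, F2` with
`var(F1) ∩ var(F2) = B`, an assignment `β : B → {0,1}` and any set `P` of variables,
the number of distinct restrictions to `P` of total satisfying assignments of
`F1 ∪ F2` extending `β` equals the product of the corresponding numbers for `F1`
and `F2`. -/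
theorem projected_count_join_mul (F1 F2 : CNF) (B : Finset Var)
    (hB : cnfVars F1 ∩ cnfVars F2 = B) (β : {x // x ∈ B} → Bool) (P : Set Var) :
    (projAssign (cnfVars F1 ∪ cnfVars F2) P ''
        {γ : {x // x ∈ cnfVars F1 ∪ cnfVars F2} → Bool |
          (∀ (x : {x // x ∈ cnfVars F1 ∪ cnfVars F2}) (hx : x.1 ∈ B),
              γ x = β ⟨x.1, hx⟩) ∧
          satisfies (extendAssign _ γ) (F1 ∪ F2)}).ncard
      = (projAssign (cnfVars F1) P ''
          {γ1 : {x // x ∈ cnfVars F1} → Bool |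
            (∀ (x : {x // x ∈ cnfVars F1}) (hx : x.1 ∈ B), γ1 x = β ⟨x.1, hx⟩) ∧
            satisfies (extendAssign _ γ1) F1}).ncard *
        (projAssign (cnfVars F2) P ''
          {γ2 : {x // x ∈ cnfVars F2} → Bool |
            (∀ (x : {x // x ∈ cnfVars F2}) (hx : x.1 ∈ B), γ2 x = β ⟨x.1, hx⟩) ∧
            satisfies (extendAssign _ γ2) F2}).ncard :=
  projected_count_join_mul_general subset_rfl subset_rfl hB.subset β P
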